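/- For every odd positive integer n, 16·T(2,3,5;n) = 3·N(2,3,5;8n+10) − N(2,3,5;4(8n+10)). -/

import Mathlib

/-!
Put `m = 8 n + 10`, so that `m ≡ 2 (mod 16)` because `n` is odd, and `Q = 2x² + 3y² + 5z²`.

* The solutions of `Q = m` have `y ≡ z (mod 2)`. Those with `y` odd have all coordinates odd and,
  via `x = ±(2k + 1)`, number `8 T(n)`. Let `E` be the set of those with `y, z` even.
* The solutions of `Q = 4m` with `y` even are the doubles of the solutions of `Q = m`. Let `P` be the
  set of those with `y` odd.

The theorem therefore says `#P = 2 #E`. Replacing `z` by `-z` exchanges the two halves `y ≡ z` and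
`y ≡ -z (mod 4)` of `P`, so it suffices to match `E` with the first half. This is done by two
rational similitudes of `Q` of multiplier `4`. Writing elements of `E` as `(X, 2Y, 2Z)`, where
necessarily `Y ≡ Z (mod 2)`, and elements of `P` as `(2x, y, z)`, they are

* `(X, Y, Z) ↦ (X, (7Y + 5Z)/2, (3Y - 7Z)/2)`, from `Y ≡ Z + 2 (mod 4)` onto `x` odd;
* `(X, Y, Z) ↦ ((3Y + 5Z)/2, X + 5(Y - Z)/2, X - 3(Y - Z)/2)`, from `Y ≡ Z (mod 4)` onto `x` even.

Conceptually, `Q` is isotropic over `ℚ₂`; a solution fixes an apartment in the tree of `SO(Q)(ℚ₂)`,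
and `E` and `P` consist of the solutions for which a fixed edge of the tree lies on the apartment,
respectively runs from distance one to distance two from it. The two similitudes move one such edge
to another.
-/


/-- Number of representations of `n` as `a*x^2 + b*y^2 + c*z^2` with `x,y,z : ℤ`. -/
noncomputable def N (a b c n : ℕ) : ℕ :=
  Nat.card {p : ℤ × ℤ × ℤ //
    (a : ℤ) * p.1 ^ 2 + (b : ℤ) * p.2.1 ^ 2 + (c : ℤ) * p.2.2 ^ 2 = (n : ℤ)}

/-- Number of representations of `n` as `a*x(x+1)/2 + b*y(y+1)/2 + c*z(z+1)/2` with `x,y,z : ℕ`. -/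
noncomputable def T (a b c n : ℕ) : ℕ :=
  Nat.card {p : ℕ × ℕ × ℕ //
    a * (p.1 * (p.1 + 1) / 2) + b * (p.2.1 * (p.2.1 + 1) / 2)
      + c * (p.2.2 * (p.2.2 + 1) / 2) = n}

/-! ### Solution sets -/

/-- The integer solutions of `2x² + 3y² + 5z² = m`. -/
def sol (m : ℤ) : Set (ℤ × ℤ × ℤ) := {p | 2 * p.1 ^ 2 + 3 * p.2.1 ^ 2 + 5 * p.2.2 ^ 2 = m}

lemma sol_finite (m : ℤ) : (sol m).Finite := by
  refine (Set.finite_Icc ((-m, -m, -m) : ℤ × ℤ × ℤ) (m, m, m)).subset ?_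
  rintro ⟨x, y, z⟩ h
  simp only [sol, Set.mem_ofPred_eq] at h
  have key : ∀ t : ℤ, -t ^ 2 ≤ t ∧ t ≤ t ^ 2 := fun t => by
    constructor
    · rcases le_or_gt 0 t with h | h <;> nlinarith
    · rcases le_or_gt t 0 with h | h <;> nlinarith
  have hx := key x
  have hy := key y
  have hz := key z
  have := sq_nonneg x
  have := sq_nonneg y
  have := sq_nonneg z
  simp only [Set.mem_Icc, Prod.mk_le_mk]
  refine ⟨⟨?_, ?_, ?_⟩, ?_, ?_, ?_⟩ <;> linarith

lemma N_eq (m : ℕ) : N 2 3 5 m = (sol m).ncard := by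
  rw [← Nat.card_coe_set_eq]
  rfl

/-- The part of `sol m` with even middle coordinate. -/
def solEven (m : ℤ) : Set (ℤ × ℤ × ℤ) := {p | p ∈ sol m ∧ p.2.1 % 2 = 0}

/-- The part of `sol m` with odd middle coordinate. -/
def solOdd (m : ℤ) : Set (ℤ × ℤ × ℤ) := {p | p ∈ sol m ∧ p.2.1 % 2 = 1}

/-- Additivity of the count over a partition; `s ⊆ sol m` supplies finiteness. -/
lemma ncard_split {s a b : Set (ℤ × ℤ × ℤ)} {m : ℤ} (hs : s ⊆ sol m)
    (hab : ∀ p, p ∈ s ↔ p ∈ a ∨ p ∈ b) (hd : ∀ p, p ∈ a → p ∉ b) : s.ncard = a.ncard + b.ncard := by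
  have e : s = a ∪ b := Set.ext hab
  have hf := (sol_finite m).subset hs
  subst e
  exact Set.ncard_union_eq (Set.disjoint_left.2 hd) (hf.subset Set.subset_union_left)
    (hf.subset Set.subset_union_right)

lemma ncard_sol (m : ℤ) : (sol m).ncard = (solEven m).ncard + (solOdd m).ncard := by
  refine ncard_split subset_rfl (fun p => ?_) fun p => ?_
  · simp only [solEven, solOdd, Set.mem_ofPred_eq, ← and_or_left]
    exact ⟨fun h => ⟨h, by omega⟩, fun h => h.1⟩
  · rintro ⟨-, h⟩ ⟨-, h'⟩
    omega

/-! ### Squares modulo powers of two -/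

lemma sq_mod_odd {x : ℤ} (h : x % 2 = 1) : ∃ k, x ^ 2 = 8 * k + 1 := by
  obtain ⟨k, hk⟩ := Int.eight_dvd_sq_sub_one_of_odd (Int.odd_iff.2 h)
  exact ⟨k, by linarith⟩

lemma sq_even {x : ℤ} (h : x % 2 = 0) : ∃ k, x = 2 * k ∧ x ^ 2 = 4 * k ^ 2 :=
  ⟨x / 2, by omega, by rw [show x ^ 2 = (2 * (x / 2)) ^ 2 by congr 1; omega]; ring⟩

/-! ### Triangular numbers and all-odd solutions -/

lemma tri (k : ℕ) : 8 * (k * (k + 1) / 2) + 1 = (2 * k + 1) ^ 2 := by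
  obtain ⟨r, hr⟩ := Nat.even_mul_succ_self k
  rw [hr, show (r + r) / 2 = r by omega]
  nlinarith

/-- The odd integer `±(2k + 1)`, with the sign given by a Boolean. -/
def oddOf (k : ℕ) (b : Bool) : ℤ := if b then 2 * k + 1 else -(2 * k + 1)

lemma oddOf_sq (k : ℕ) (b : Bool) : (oddOf k b) ^ 2 = 8 * ((k * (k + 1) / 2 : ℕ) : ℤ) + 1 := by
  have h : 8 * ((k * (k + 1) / 2 : ℕ) : ℤ) + 1 = (2 * (k : ℤ) + 1) ^ 2 := by exact_mod_cast tri k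
  rw [h]
  unfold oddOf
  split_ifs <;> ring

lemma oddOf_mod (k : ℕ) (b : Bool) : oddOf k b % 2 = 1 := by
  unfold oddOf
  split_ifs <;> omega

lemma oddOf_inj {k k' : ℕ} {b b' : Bool} (h : oddOf k b = oddOf k' b') : k = k' ∧ b = b' := by
  unfold oddOf at h
  cases b <;> cases b' <;> simp at h ⊢ <;> omega

lemma exists_oddOf {x : ℤ} (h : x % 2 = 1) : ∃ k b, oddOf k b = x := by
  rcases le_or_gt 0 x with h0 | h0
  · exact ⟨(x / 2).toNat, true, by simp [oddOf]; omega⟩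
  · exact ⟨((-x) / 2).toNat, false, by simp [oddOf]; omega⟩

/-- If `2x² + 3y² + 5z² ≡ 2 (mod 8)` and `y` is odd, then `x` and `z` are odd as well. -/
lemma all_odd {m x y z : ℤ} (hm : m % 8 = 2) (h : 2 * x ^ 2 + 3 * y ^ 2 + 5 * z ^ 2 = m)
    (hy : y % 2 = 1) : x % 2 = 1 ∧ z % 2 = 1 := by
  obtain ⟨b, hb⟩ := sq_mod_odd hy
  rcases Int.emod_two_eq_zero_or_one z with hz | hz
  · obtain ⟨c, -, hc⟩ := sq_even hz
    omega
  · obtain ⟨c, hc⟩ := sq_mod_odd hz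
    rcases Int.emod_two_eq_zero_or_one x with hx | hx
    · obtain ⟨a, -, ha⟩ := sq_even hx
      omega
    · exact ⟨hx, hz⟩

lemma ncard_solOdd (n : ℕ) : (solOdd (8 * n + 10)).ncard = 8 * T 2 3 5 n := by
  have e : Nat.card ({p : ℕ × ℕ × ℕ // 2 * (p.1 * (p.1 + 1) / 2) + 3 * (p.2.1 * (p.2.1 + 1) / 2)
      + 5 * (p.2.2 * (p.2.2 + 1) / 2) = n} × Bool × Bool × Bool) =
      Nat.card (solOdd (8 * n + 10)) := by
    refine Nat.card_congr (Equiv.ofBijective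
      (fun q => ⟨(oddOf q.1.1.1 q.2.1, oddOf q.1.1.2.1 q.2.2.1, oddOf q.1.1.2.2 q.2.2.2), ?_⟩)
      ⟨?_, ?_⟩)
    · obtain ⟨⟨⟨i, j, k⟩, h⟩, b, c, d⟩ := q
      refine ⟨?_, oddOf_mod _ _⟩
      simp only [sol, Set.mem_ofPred_eq, oddOf_sq] at h ⊢
      omega
    · rintro ⟨⟨⟨i, j, k⟩, h⟩, b, c, d⟩ ⟨⟨⟨i', j', k'⟩, h'⟩, b', c', d'⟩ hq
      simp only [Subtype.mk.injEq, Prod.mk.injEq] at hq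
      obtain ⟨rfl, rfl⟩ := oddOf_inj hq.1
      obtain ⟨rfl, rfl⟩ := oddOf_inj hq.2.1
      obtain ⟨rfl, rfl⟩ := oddOf_inj hq.2.2
      rfl
    · rintro ⟨⟨x, y, z⟩, h, hy⟩
      simp only [sol, Set.mem_ofPred_eq] at h hy
      obtain ⟨hx, hz⟩ := all_odd (by omega) h hy
      obtain ⟨i, b, rfl⟩ := exists_oddOf hx
      obtain ⟨j, c, rfl⟩ := exists_oddOf hy
      obtain ⟨k, d, rfl⟩ := exists_oddOf hz
      simp only [oddOf_sq] at h
      exact ⟨⟨⟨(i, j, k), by simp only; omega⟩, b, c, d⟩, rfl⟩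
  rw [← Nat.card_coe_set_eq, ← e, Nat.card_prod]
  simp only [Nat.card_eq_fintype_card (α := Bool × Bool × Bool), Fintype.card_prod,
    Fintype.card_bool, T]
  push_cast
  ring

/-! ### Even solutions of `Q = 4m` -/

lemma ncard_solEven_four {m : ℤ} (hm : m % 2 = 0) : (solEven (4 * m)).ncard = (sol m).ncard := by
  rw [← Set.ncard_image_of_injective (sol m)
    (f := fun p : ℤ × ℤ × ℤ => (2 * p.1, 2 * p.2.1, 2 * p.2.2))]
  · congr 1
    ext ⟨x, y, z⟩
    simp only [solEven, sol, Set.mem_ofPred_eq, Set.mem_image, Prod.exists, Prod.mk.injEq]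
    constructor
    · rintro ⟨h, hy⟩
      obtain ⟨b, rfl, hb⟩ := sq_even hy
      have hz : z % 2 = 0 := by
        by_contra hz
        obtain ⟨c, hc⟩ := sq_mod_odd (x := z) (by omega)
        omega
      obtain ⟨c, rfl, hc⟩ := sq_even hz
      have hx : x % 2 = 0 := by
        by_contra hx
        obtain ⟨a, ha⟩ := sq_mod_odd (x := x) (by omega)
        omega
      obtain ⟨a, rfl, ha⟩ := sq_even hx
      exact ⟨a, b, c, by linarith, rfl, rfl, rfl⟩
    · rintro ⟨a, b, c, h, rfl, rfl, rfl⟩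
      exact ⟨by linear_combination 4 * h, by omega⟩
  · rintro ⟨a, b, c⟩ ⟨a', b', c'⟩ h
    simp only [Prod.mk.injEq] at h ⊢
    omega

/-! ### The odd solutions of `Q = 4m` are twice as many as the even solutions of `Q = m` -/

/-- The solutions `(2x, y, z)` of `Q = 4m` with `y` odd, `y ≡ z (mod 4)` and `x ≡ r (mod 2)`. -/
def near (r m : ℤ) : Set (ℤ × ℤ × ℤ) :=
  {p | p ∈ solOdd (4 * m) ∧ 4 ∣ p.2.1 - p.2.2 ∧ p.1 % 4 = 2 * r}

/-- The solutions `(X, 2Y, 2Z)` of `Q = m` with `Y ≡ Z + 2r (mod 4)`. -/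
def onAxis (r m : ℤ) : Set (ℤ × ℤ × ℤ) :=
  {p | p ∈ solEven m ∧ (p.2.1 - p.2.2) % 8 = 4 * r}

/-- Common parameters for `onAxis r m` and `near r m`: the element `(X, 2Y, 2Z)` with
`Y = Z + 2r + 4d` is recorded as `(X, Z, d)`. -/
def param (r m : ℤ) : Set (ℤ × ℤ × ℤ) :=
  {p | 2 * p.1 ^ 2 + 12 * (p.2.1 + 2 * r + 4 * p.2.2) ^ 2 + 20 * p.2.1 ^ 2 = m}

lemma ncard_onAxis (m r : ℤ) (hr : r = 0 ∨ r = 1) :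
    (onAxis r m).ncard = (param r m).ncard := by
  rw [← Set.ncard_image_of_injective (param r m)
    (f := fun p : ℤ × ℤ × ℤ => (p.1, 2 * (p.2.1 + 2 * r + 4 * p.2.2), 2 * p.2.1))]
  · congr 1
    ext ⟨x, y, z⟩
    simp only [onAxis, solEven, sol, param, Set.mem_ofPred_eq, Set.mem_image, Prod.exists,
      Prod.mk.injEq]
    constructor
    · rintro ⟨⟨h, hy⟩, hr'⟩
      have hz : z % 2 = 0 := by omega
      refine ⟨x, z / 2, (y - z - 4 * r) / 8, ?_, rfl, by omega, by omega⟩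
      rw [← h]
      have h1 : 2 * (z / 2 + 2 * r + 4 * ((y - z - 4 * r) / 8)) = y := by omega
      have h2 : 2 * (z / 2) = z := by omega
      linear_combination (3 * (2 * (z / 2 + 2 * r + 4 * ((y - z - 4 * r) / 8)) + y)) * h1
        + 5 * (2 * (z / 2) + z) * h2
    · rintro ⟨X, Z, d, h, rfl, rfl, rfl⟩
      exact ⟨⟨by linear_combination h, by omega⟩, by rcases hr with rfl | rfl <;> omega⟩
  · rintro ⟨a, b, c⟩ ⟨a', b', c'⟩ h
    simp only [Prod.mk.injEq] at h ⊢
    omega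

/-- The similitude onto the solutions `(2x, y, z)` with `x` odd. -/
lemma ncard_near_one {m : ℤ} (hm : m % 16 = 2) : (near 1 m).ncard = (param 1 m).ncard := by
  rw [← Set.ncard_image_of_injective (param 1 m)
    (f := fun p : ℤ × ℤ × ℤ =>
      (2 * p.1, 6 * p.2.1 + 7 + 14 * p.2.2, -2 * p.2.1 + 3 + 6 * p.2.2))]
  · congr 1
    ext ⟨x, y, z⟩
    simp only [near, solOdd, sol, param, Set.mem_ofPred_eq, Set.mem_image, Prod.exists,
      Prod.mk.injEq]
    constructor
    · rintro ⟨⟨h, hy⟩, ⟨t, ht⟩, hx⟩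
      obtain ⟨a, rfl, ha⟩ := sq_even (x := x) (by omega)
      obtain ⟨a', ha'⟩ := sq_mod_odd (x := a) (by omega)
      obtain rfl : y = z + 4 * t := by omega
      -- Modulo 8 the form `z² + 3zt + 6t²` factors as `(z + 5t)(z - 2t)`, and `z - 2t` is odd.
      have h8 : (8 : ℤ) ∣ (z - 2 * t) * (z + 5 * t) := by
        refine ⟨m / 16 - a' - 2 * t ^ 2, ?_⟩
        have : m = 16 * (m / 16) + 2 := by omega
        have h64 : 8 * (z ^ 2 + 3 * z * t + 6 * t ^ 2) = 64 * (m / 16 - a') := by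
          linear_combination h - 2 * ha - 8 * ha' + 4 * this
        linarith
      have hc : IsCoprime (8 : ℤ) (z - 2 * t) := by
        have : IsCoprime (2 : ℤ) (z - 2 * t) := ⟨-((z - 2 * t) / 2), 1, by omega⟩
        simpa using this.pow_left (m := 3)
      obtain ⟨k, hk⟩ := hc.dvd_of_dvd_mul_left h8
      obtain ⟨d, hd⟩ : ∃ d, z + t = 4 + 8 * d := ⟨(z + t - 4) / 8, by omega⟩
      obtain ⟨Z, hZ⟩ : ∃ Z, t = 2 * Z + 1 + 2 * d := ⟨(t - 1 - 2 * d) / 2, by omega⟩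
      obtain rfl : z = 4 + 8 * d - t := by omega
      subst hZ
      exact ⟨a, Z, d, by linarith, rfl, by ring, by ring⟩
    · rintro ⟨X, Z, d, h, rfl, rfl, rfl⟩
      have hX : X % 2 = 1 := by
        by_contra hX
        obtain ⟨a, -, ha⟩ := sq_even (x := X) (by omega)
        omega
      exact ⟨⟨by linear_combination 4 * h, by omega⟩, ⟨2 * Z + 1 + 2 * d, by ring⟩, by omega⟩
  · rintro ⟨a, b, c⟩ ⟨a', b', c'⟩ h
    simp only [Prod.mk.injEq] at h ⊢
    omega

/-- The similitude onto the solutions `(2x, y, z)` with `x` even. -/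
lemma ncard_near_zero {m : ℤ} (hm : m % 16 = 2) : (near 0 m).ncard = (param 0 m).ncard := by
  rw [← Set.ncard_image_of_injective (param 0 m)
    (f := fun p : ℤ × ℤ × ℤ =>
      (8 * p.2.1 + 12 * p.2.2, p.1 + 10 * p.2.2, p.1 - 6 * p.2.2))]
  · congr 1
    ext ⟨x, y, z⟩
    simp only [near, solOdd, sol, param, Set.mem_ofPred_eq, Set.mem_image, Prod.exists,
      Prod.mk.injEq]
    constructor
    · rintro ⟨⟨h, hy⟩, ⟨t, ht⟩, hx⟩
      obtain ⟨a, rfl⟩ : ∃ a, x = 4 * a := ⟨x / 4, by omega⟩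
      obtain rfl : y = z + 4 * t := by omega
      obtain ⟨z', hz'⟩ := sq_mod_odd (x := z) (by omega)
      have hm' : m = 16 * (m / 16) + 2 := by omega
      have h1 : 3 * ((z + 2 * t) * t) = 4 * (2 * (m / 16) - a ^ 2 - 2 * z') := by
        linarith
      have h4 : (4 : ℤ) ∣ (z + 2 * t) * t := by omega
      have hc : IsCoprime (4 : ℤ) (z + 2 * t) := by
        have : IsCoprime (2 : ℤ) (z + 2 * t) := ⟨-((z + 2 * t) / 2), 1, by omega⟩
        simpa using this.pow_left (m := 2)
      obtain ⟨d, rfl⟩ := hc.dvd_of_dvd_mul_left h4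
      -- Dividing by 4 and reducing modulo 2 gives `d ≡ a`.
      have h2 : 3 * (z * d) + 24 * d ^ 2 = 2 * (m / 16) - a ^ 2 - 2 * z' := by
        linarith
      have hpar : (a - d) % 2 = 0 := by
        have hz2 : Odd z := Int.odd_iff.2 (by omega)
        have : Even (3 * (z * d) + 24 * d ^ 2 + a ^ 2) :=
          ⟨m / 16 - z', by linear_combination h2⟩
        rw [← Int.even_iff]
        have h24 : Even (24 : ℤ) := by decide
        have h3 : ¬ Even (3 : ℤ) := by decide
        have hz3 : ¬ Even z := by simpa using hz2
        simp only [Int.even_add, Int.even_mul, Int.even_pow, h24, h3, hz3] at this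
        rw [Int.even_sub]
        simp at this
        tauto
      obtain ⟨Z, hZ⟩ : ∃ Z, a = 2 * Z + 3 * d := ⟨(a - 3 * d) / 2, by omega⟩
      subst hZ
      exact ⟨z + 6 * d, Z, d, by linarith, by ring, by ring, by ring⟩
    · rintro ⟨X, Z, d, h, rfl, rfl, rfl⟩
      have hX : X % 2 = 1 := by
        by_contra hX
        obtain ⟨a, -, ha⟩ := sq_even (x := X) (by omega)
        omega
      have hd : (Z + 2 * 0 + 4 * d) % 2 = Z % 2 := by omega
      exact ⟨⟨by linear_combination 4 * h, by omega⟩, ⟨4 * d, by ring⟩, by omega⟩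
  · rintro ⟨a, b, c⟩ ⟨a', b', c'⟩ h
    simp only [Prod.mk.injEq] at h ⊢
    omega

lemma ncard_solEven {m : ℤ} (hm : m % 16 = 2) :
    (solEven m).ncard = (onAxis 0 m).ncard + (onAxis 1 m).ncard := by
  refine ncard_split (m := m) (fun p hp => hp.1) (fun p => ?_) fun p => ?_
  · simp only [onAxis, Set.mem_ofPred_eq, ← and_or_left]
    refine ⟨fun h => ⟨h, ?_⟩, fun h => h.1⟩
    obtain ⟨x, y, z⟩ := p
    obtain ⟨h, hy⟩ := h
    simp only [sol, Set.mem_ofPred_eq] at h hy ⊢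
    obtain ⟨b, rfl, hb⟩ := sq_even hy
    have hz : z % 2 = 0 := by
      by_contra hz
      obtain ⟨c, hc⟩ := sq_mod_odd (x := z) (by omega)
      omega
    obtain ⟨c, rfl, hc⟩ := sq_even hz
    have hx : x % 2 = 1 := by
      by_contra hx
      obtain ⟨a, -, ha⟩ := sq_even (x := x) (by omega)
      omega
    obtain ⟨a, ha⟩ := sq_mod_odd hx
    have hbc : b % 2 = c % 2 := by
      rcases Int.emod_two_eq_zero_or_one b with hb' | hb' <;>
      rcases Int.emod_two_eq_zero_or_one c with hc' | hc'
      · omega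
      · obtain ⟨u, -, hu⟩ := sq_even hb'
        obtain ⟨v, hv⟩ := sq_mod_odd hc'
        omega
      · obtain ⟨u, hu⟩ := sq_mod_odd hb'
        obtain ⟨v, -, hv⟩ := sq_even hc'
        omega
      · omega
    omega
  · rintro ⟨-, h⟩ ⟨-, h'⟩
    omega

/-- The half `y ≡ z (mod 4)` of the odd solutions of `Q = 4m`. -/
def half (m : ℤ) : Set (ℤ × ℤ × ℤ) := {p | p ∈ solOdd (4 * m) ∧ 4 ∣ p.2.1 - p.2.2}

lemma odd_four {m x y z : ℤ} (hm : m % 16 = 2) (h : 2 * x ^ 2 + 3 * y ^ 2 + 5 * z ^ 2 = 4 * m)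
    (hy : y % 2 = 1) : x % 2 = 0 ∧ z % 2 = 1 := by
  obtain ⟨b, hb⟩ := sq_mod_odd hy
  have hz : z % 2 = 1 := by
    by_contra hz
    obtain ⟨c, -, hc⟩ := sq_even (x := z) (by omega)
    omega
  obtain ⟨c, hc⟩ := sq_mod_odd hz
  refine ⟨?_, hz⟩
  by_contra hx
  obtain ⟨a, ha⟩ := sq_mod_odd (x := x) (by omega)
  omega

lemma ncard_half {m : ℤ} (hm : m % 16 = 2) :
    (half m).ncard = (near 0 m).ncard + (near 1 m).ncard := by
  refine ncard_split (m := 4 * m) (fun p hp => hp.1.1) (fun p => ?_) fun p => ?_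
  · simp only [near, half, Set.mem_ofPred_eq, ← and_or_left]
    refine ⟨fun h => ⟨h.1, h.2, ?_⟩, fun h => ⟨h.1, h.2.1⟩⟩
    have := odd_four hm h.1.1 h.1.2
    omega
  · rintro ⟨-, -, h⟩ ⟨-, -, h'⟩
    omega

lemma ncard_solOdd_four {m : ℤ} (hm : m % 16 = 2) :
    (solOdd (4 * m)).ncard = (half m).ncard + (half m).ncard := by
  have hinj : Function.Injective (fun p : ℤ × ℤ × ℤ => (p.1, p.2.1, -p.2.2)) := by
    rintro ⟨a, b, c⟩ ⟨a', b', c'⟩ h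
    simpa using h
  refine Eq.trans (ncard_split (m := 4 * m) (fun p hp => hp.1) ?_ ?_)
    (congrArg ((half m).ncard + ·) (Set.ncard_image_of_injective (half m) hinj))
  · rintro ⟨x, y, z⟩
    simp only [half, solOdd, sol, Set.mem_ofPred_eq, Set.mem_image, Prod.exists, Prod.mk.injEq]
    constructor
    · rintro ⟨h, hy⟩
      have := odd_four hm h hy
      by_cases h4 : 4 ∣ y - z
      · exact Or.inl ⟨⟨h, hy⟩, h4⟩
      · exact Or.inr ⟨x, y, -z, ⟨⟨by linear_combination h, hy⟩, by omega⟩, rfl, rfl, by ring⟩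
    · rintro (h | ⟨a, b, c, ⟨⟨h, hy⟩, -⟩, rfl, rfl, rfl⟩)
      · exact h.1
      · exact ⟨by linear_combination h, hy⟩
  · rintro ⟨x, y, z⟩
    simp only [half, solOdd, sol, Set.mem_ofPred_eq, Set.mem_image, Prod.exists, Prod.mk.injEq]
    rintro ⟨⟨h, hy⟩, h4⟩ ⟨a, b, c, ⟨-, h4'⟩, rfl, rfl, rfl⟩
    omega

theorem stmt_16 (n : ℕ) (hn : 0 < n) (hpar : Odd n) :
    (16 * T 2 3 5 n : ℤ) = 3 * (N 2 3 5 (8 * n + 10) : ℤ) - (N 2 3 5 (4 * (8 * n + 10)) : ℤ) := by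
  obtain ⟨j, hj⟩ := hpar
  have hm : (8 * (n : ℤ) + 10) % 16 = 2 := by omega
  rw [N_eq, N_eq]
  push_cast
  have h1 := ncard_sol (8 * (n : ℤ) + 10)
  have h2 := ncard_sol (4 * (8 * (n : ℤ) + 10))
  have h3 := ncard_solEven_four (m := 8 * (n : ℤ) + 10) (by omega)
  have h4 := ncard_solOdd n
  have h5 := ncard_solOdd_four hm
  have h6 := ncard_half hm
  have h7 := ncard_solEven hm
  rw [ncard_onAxis _ 0 (by simp), ncard_onAxis _ 1 (by simp)] at h7
  rw [ncard_near_zero hm, ncard_near_one hm] at h6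
  omega
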